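/- Let s ≥ 8x > 0. There exists K = K(s, x) such that the following holds for all n and d with n ≥ K·d and d ≥ log^s(n): if G is an n-vertex graph with minimum degree δ(G) ≥ d containing no balanced subdivision TK_{√d}^{(2)} of the complete graph on √d vertices, then for any vertex set W ⊆ V(G) with |W| ≤ d·m^x (where m is the smallest even integer exceeding 80·log⁴(n/d)), the average degree of G − W is at least d/2. -/

import Mathlib

/-!
Write `w = |W|`, `A = V ∖ W`, `N = n / d`, and let `M = m ^ x ≥ w / d`.  If `G − W`
had average degree below `d / 2`, then, since every vertex has degree at least `d`, more than `d |A| / 2` edges would run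
between `A` and `W`.  As `w ≤ d · polylog(N)`, this bipartite graph has density at least
`1 / polylog(N)` while `|A| ≥ n / 2 = d N / 2` is huge compared with `w ^ 2 / d`, and dependent
random choice applies to it.

For a uniformly random `(p + 1)`-tuple of vertices of `A`, let `X ⊆ W` be its common neighbourhood.
By the power mean inequality `X` has expected size at least `(d / 2) (2 M) ^ (-p)`, whereas the
expected number of ordered pairs in `X` having fewer than `d` common neighbours in `A` is at most
`w ^ 2 (d / |A|) ^ (p + 1)`.  Taking `p` minimal with `d ^ 4 ≤ N ^ (p + 1)` makes the latter at
most `1 / 4` and keeps the former at least `⌊√d⌋ - 1 / 2`, because `(2 M) ^ 32 ≤ N` for `N` large.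
Deleting a vertex from every bad pair (`exists_rich_set`) leaves `⌊√d⌋` vertices of `W` any two of
which have at least `d` common neighbours in `A`; by Hall's theorem the pairs get distinct
midpoints (`hasBalancedSubdivision_of_rich`), which is the forbidden subdivision.
-/

open SimpleGraph

/-- `G` contains a balanced subdivision `TK_k^{(ℓ)}` with branch vertices `b 0, …, b (k-1)`:
internally vertex-disjoint paths of length `ℓ` between every pair of branch vertices,
whose internal vertices avoid all branch vertices, and which pairwise meet only in
common endvertices. -/
def BalancedCliqueSubdivisionOn {V : Type*} (G : SimpleGraph V) {k : ℕ}
    (b : Fin k → V) (ℓ : ℕ) : Prop :=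
  Function.Injective b ∧
  ∃ P : ∀ i j : Fin k, G.Walk (b i) (b j),
    (∀ i j : Fin k, i < j → (P i j).IsPath ∧ (P i j).length = ℓ) ∧
    (∀ i j t : Fin k, i < j → b t ∈ (P i j).support → t = i ∨ t = j) ∧
    (∀ i j i' j' : Fin k, i < j → i' < j' → (i, j) ≠ (i', j') →
      ∀ v : V, v ∈ (P i j).support → v ∈ (P i' j').support →
        (v = b i ∨ v = b j) ∧ (v = b i' ∨ v = b j'))

/-- `G` contains a balanced subdivision `TK_k^{(ℓ)}`. -/
def HasBalancedSubdivision {V : Type*} (G : SimpleGraph V) (k ℓ : ℕ) : Prop :=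
  ∃ b : Fin k → V, BalancedCliqueSubdivisionOn G b ℓ

open Finset in
/-- Dependent random choice, by counting over all `(p + 1)`-tuples of vertices of `A`.  The left
side of `h` bounds the number of ordered pairs of small codegree summed over the tuples; the sum on
the right counts the sizes of the common neighbourhoods. -/
lemma exists_rich_set {V : Type*} [DecidableEq V] (G : SimpleGraph V)
    [DecidableRel G.Adj] (A W : Finset V) (p k d : ℕ)
    (h : k * #A ^ (p + 1) + #W ^ 2 * d ^ (p + 1) <
      ∑ u ∈ W, #{a ∈ A | G.Adj u a} ^ (p + 1) + #A ^ (p + 1)) :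
    ∃ S ⊆ W, k ≤ #S ∧ ∀ u ∈ S, ∀ v ∈ S, u ≠ v → d ≤ #{a ∈ A | G.Adj u a ∧ G.Adj v a} := by
  classical
  set T : Finset (Fin (p + 1) → V) := Fintype.piFinset (fun _ => A) with hT
  have hTcard : #T = #A ^ (p + 1) := by simp [hT]
  let X : (Fin (p + 1) → V) → Finset V := fun t => {u ∈ W | ∀ i, G.Adj u (t i)}
  let B : Finset (V × V) :=
    {e ∈ W ×ˢ W | e.1 ≠ e.2 ∧ #{a ∈ A | G.Adj e.1 a ∧ G.Adj e.2 a} < d}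
  let bad : (Fin (p + 1) → V) → Finset (V × V) := fun t =>
    {e ∈ B | ∀ i, G.Adj e.1 (t i) ∧ G.Adj e.2 (t i)}
  have hX : ∑ t ∈ T, #(X t) = ∑ u ∈ W, #{a ∈ A | G.Adj u a} ^ (p + 1) := by
    simp only [X, card_filter]
    rw [sum_comm]
    refine sum_congr rfl fun u _ => ?_
    rw [← card_filter, ← card_filter]
    have : ({t ∈ T | ∀ i, G.Adj u (t i)} : Finset _) =
        Fintype.piFinset (fun _ : Fin (p + 1) => ({a ∈ A | G.Adj u a} : Finset V)) := by
      ext t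
      simp [hT, forall_and]
    rw [this]; simp
  have hbad : ∑ t ∈ T, #(bad t) ≤ #W ^ 2 * d ^ (p + 1) := by
    simp only [bad, card_filter]
    rw [sum_comm]
    have hB : #B ≤ #W ^ 2 := by
      refine (card_filter_le _ _).trans ?_
      rw [card_product, sq]
    refine le_trans (sum_le_card_nsmul _ _ (d ^ (p + 1)) fun e he => ?_) ?_
    · rw [← card_filter]
      have : ({t ∈ T | ∀ i, G.Adj e.1 (t i) ∧ G.Adj e.2 (t i)} : Finset _) =
          Fintype.piFinset
            (fun _ : Fin (p + 1) => ({a ∈ A | G.Adj e.1 a ∧ G.Adj e.2 a} : Finset V)) := by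
        ext t
        simp only [hT, mem_filter, Fintype.mem_piFinset, forall_and]
      rw [this]
      simp only [Fintype.card_piFinset, prod_const, card_univ, Fintype.card_fin]
      exact Nat.pow_le_pow_left (mem_filter.1 he).2.2.le _
    · rw [smul_eq_mul]
      exact Nat.mul_le_mul_right _ hB
  obtain ⟨t, -, htt⟩ : ∃ t ∈ T, k + #(bad t) < #(X t) + 1 := by
    refine exists_lt_of_sum_lt ?_
    rw [sum_add_distrib, sum_add_distrib, hX, sum_const, sum_const, hTcard]
    simp only [smul_eq_mul, mul_one]
    rw [mul_comm _ k]
    omega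
  refine ⟨X t \ (bad t).image Prod.fst, sdiff_subset.trans (filter_subset _ _), ?_, ?_⟩
  · have h1 := le_card_sdiff ((bad t).image Prod.fst) (X t)
    have h2 : #((bad t).image Prod.fst) ≤ #(bad t) := card_image_le
    omega
  · intro u hu v hv huv
    by_contra hlt
    rw [mem_sdiff] at hu hv
    refine hu.2 (mem_image.2 ⟨(u, v), ?_, rfl⟩)
    have hu1 := mem_filter.1 hu.1
    have hv1 := mem_filter.1 hv.1
    exact mem_filter.2 ⟨mem_filter.2 ⟨mem_product.2 ⟨hu1.1, hv1.1⟩, huv, not_le.1 hlt⟩,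
      fun i => ⟨hu1.2 i, hv1.2 i⟩⟩

open Finset in
/-- Hall's theorem supplies distinct midpoints, as each pair has at least `k * k` candidates. -/
lemma hasBalancedSubdivision_of_rich {V : Type*} [DecidableEq V]
    (G : SimpleGraph V) [DecidableRel G.Adj] (A S : Finset V) (hAS : Disjoint A S) (k d : ℕ)
    (hkd : k * k ≤ d) (hk : k ≤ #S)
    (hS : ∀ u ∈ S, ∀ v ∈ S, u ≠ v → d ≤ #{a ∈ A | G.Adj u a ∧ G.Adj v a}) :
    HasBalancedSubdivision G k 2 := by
  classical
  obtain ⟨S', hS'S, hS'k⟩ := exists_subset_card_eq hk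
  let b : Fin k → V := fun i => (S'.equivFin.symm (Fin.cast hS'k.symm i)).1
  have hbS : ∀ i, b i ∈ S := fun i => hS'S (S'.equivFin.symm _).2
  have hbinj : Function.Injective b := by
    intro i j hij
    simpa [b, Subtype.val_inj, Fin.ext_iff] using hij
  let I := {e : Fin k × Fin k // e.1 < e.2}
  let c : I → Finset V := fun e => {a ∈ A | G.Adj (b e.1.1) a ∧ G.Adj (b e.1.2) a}
  have hI : Fintype.card I ≤ k * k := by
    refine (Fintype.card_subtype_le _).trans ?_
    simp
  obtain ⟨f, hfinj, hf⟩ := (all_card_le_biUnion_card_iff_exists_injective c).1 (by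
    intro s
    rcases s.eq_empty_or_nonempty with rfl | ⟨e, he⟩
    · simp
    · calc #s ≤ Fintype.card I := card_le_univ s
        _ ≤ d := hI.trans hkd
        _ ≤ #(c e) := hS _ (hbS _) _ (hbS _) (fun h => (ne_of_lt e.2) (hbinj h))
        _ ≤ _ := card_le_card (subset_biUnion_of_mem c he))
  have hfA : ∀ e, f e ∈ A := fun e => (mem_filter.1 (hf e)).1
  have hfb : ∀ e i, f e ≠ b i := fun e i h =>
    disjoint_left.1 hAS (hfA e) (h ▸ hbS i)
  have hadj : ∀ e : I, G.Adj (b e.1.1) (f e) ∧ G.Adj (b e.1.2) (f e) :=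
    fun e => (mem_filter.1 (hf e)).2
  have hP : ∀ i j : Fin k, ∃ P : G.Walk (b i) (b j), ∀ h : i < j,
      P.length = 2 ∧ P.support = [b i, f ⟨(i, j), h⟩, b j] := by
    intro i j
    rcases lt_trichotomy i j with h | h | h
    · exact ⟨.cons (hadj ⟨(i, j), h⟩).1 (.cons (hadj ⟨(i, j), h⟩).2.symm .nil), fun _ => by simp⟩
    · subst h
      exact ⟨.nil, fun h => absurd h (lt_irrefl _)⟩
    · exact ⟨.cons (hadj ⟨(j, i), h⟩).2 (.cons (hadj ⟨(j, i), h⟩).1.symm .nil),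
        fun h' => absurd h (lt_asymm h')⟩
  choose P hP using hP
  refine ⟨b, hbinj, P, ?_, ?_, ?_⟩
  · intro i j hij
    refine ⟨?_, (hP i j hij).1⟩
    rw [SimpleGraph.Walk.isPath_def, (hP i j hij).2]
    have h1 := hfb ⟨(i, j), hij⟩ i
    have h2 := hfb ⟨(i, j), hij⟩ j
    have h3 : b i ≠ b j := fun h => hij.ne (hbinj h)
    simp [h1.symm, h2, h3]
  · intro i j t hij ht
    rw [(hP i j hij).2] at ht
    have h1 := (hfb ⟨(i, j), hij⟩ t).symm
    simpa [h1, hbinj.eq_iff] using ht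
  · intro i j i' j' hij hij' hne v hv hv'
    rw [(hP i j hij).2] at hv
    rw [(hP i' j' hij').2] at hv'
    have h1 : f ⟨(i, j), hij⟩ ≠ f ⟨(i', j'), hij'⟩ := fun h => hne (by
      simpa using congrArg Subtype.val (hfinj h))
    have h2 := hfb ⟨(i, j), hij⟩
    have h3 := hfb ⟨(i', j'), hij'⟩
    simp only [List.mem_cons, List.not_mem_nil, or_false] at hv hv'
    grind

open Finset in
/-- The edges between `A` and its complement, counted from the complement: minimum degree `d` and a
sparse `G[A]` force many of them. -/
lemma cross_edges {V : Type*} [Fintype V] [DecidableEq V] (G : SimpleGraph V)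
    [DecidableRel G.Adj] (A : Finset V) (d : ℝ)
    (hd : ∀ v : V, d ≤ ((G.neighborSet v).ncard : ℝ))
    (he : 2 * ((G.induce (A : Set V)).edgeSet.ncard : ℝ) < d / 2 * #A) :
    d / 2 * #A < ∑ u ∈ Aᶜ, (#{a ∈ A | G.Adj u a} : ℝ) := by
  classical
  have h1 : ∑ v ∈ A, (#{a ∈ A | G.Adj v a} : ℝ) =
      2 * ((G.induce (A : Set V)).edgeSet.ncard : ℝ) := by
    have := (G.induce (A : Set V)).sum_degrees_eq_twice_card_edges
    rw [← SimpleGraph.coe_edgeFinset, Set.ncard_coe_finset]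
    have h2 : ∑ v ∈ A, #{a ∈ A | G.Adj v a} =
        ∑ v : (A : Set V), (G.induce (A : Set V)).degree v := by
      rw [← sum_coe_sort A]
      refine sum_congr rfl fun v _ => ?_
      rw [← SimpleGraph.card_neighborFinset_eq_degree]
      refine (card_bij (fun a _ => a.1) ?_ ?_ ?_).symm
      · intro a ha
        simpa using ha
      · intro a _ a' _ h
        exact Subtype.ext h
      · intro a ha
        rw [mem_filter] at ha
        exact ⟨⟨a, ha.1⟩, by simpa using ha.2, rfl⟩
    rw [this] at h2
    exact_mod_cast h2
  have h3 : ∀ v ∈ A, d ≤ #{a ∈ A | G.Adj v a} + #{a ∈ Aᶜ | G.Adj v a} := by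
    intro v _
    refine (hd v).trans ?_
    have : (G.neighborSet v).ncard = #{a ∈ A | G.Adj v a} + #{a ∈ Aᶜ | G.Adj v a} := by
      rw [← SimpleGraph.coe_neighborFinset, Set.ncard_coe_finset, ← card_union_of_disjoint
        (disjoint_filter_filter disjoint_compl_right), ← filter_union, union_compl]
      congr 1
      ext; simp
    rw [this]; push_cast; exact le_rfl
  have h4 := card_nsmul_le_sum A _ d h3
  have h5 : ∑ v ∈ A, (#{a ∈ Aᶜ | G.Adj v a} : ℝ) = ∑ u ∈ Aᶜ, (#{a ∈ A | G.Adj u a} : ℝ) := by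
    simp only [card_filter]
    push_cast
    rw [sum_comm]
    simp only [G.adj_comm]
  rw [sum_add_distrib, h1, h5, nsmul_eq_mul] at h4
  linarith

/-- Any power of `80 log⁴ N + 2` grows more slowly than `N ^ (1/32)`. -/
lemma exists_threshold (x : ℝ) (hx : 0 < x) : ∃ K : ℝ, 2 ^ 32 ≤ K ∧ ∀ N : ℝ, K ≤ N →
    (2 * (80 * Real.log N ^ 4 + 2) ^ x) ^ 32 ≤ N := by
  have h := isLittleO_log_rpow_rpow_atTop (4 * x) (s := 1 / 32) (by norm_num)
  have hc : (0 : ℝ) < (2 * 82 ^ x)⁻¹ := by positivity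
  have h' := h.bound hc
  obtain ⟨K0, hK0⟩ := Filter.eventually_atTop.1 h'
  refine ⟨max K0 (2 ^ 32), le_max_right _ _, fun N hN => ?_⟩
  have hN2 : (2 : ℝ) ^ 32 ≤ N := (le_max_right _ _).trans hN
  have hN0 : (0 : ℝ) < N := lt_of_lt_of_le (by norm_num) hN2
  have hlog : 1 ≤ Real.log N := by
    rw [Real.le_log_iff_exp_le hN0]
    have := Real.exp_one_lt_d9
    norm_num at hN2
    linarith
  have hb := hK0 N ((le_max_left _ _).trans hN)
  rw [Real.norm_of_nonneg (by positivity), Real.norm_of_nonneg (by positivity)] at hb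
  have h1 : (80 * Real.log N ^ 4 + 2) ^ x ≤ 82 ^ x * Real.log N ^ (4 * x) := by
    have e : Real.log N ^ (4 * x) = (Real.log N ^ 4) ^ x := by
      rw [Real.rpow_mul (by linarith)]
      norm_cast
    rw [e, ← Real.mul_rpow (by norm_num) (by positivity)]
    refine Real.rpow_le_rpow (by positivity) ?_ hx.le
    have := one_le_pow₀ hlog (n := 4)
    linarith
  have h2 : 2 * (80 * Real.log N ^ 4 + 2) ^ x ≤ N ^ (1 / 32 : ℝ) := by
    calc _ ≤ 2 * 82 ^ x * Real.log N ^ (4 * x) := by linarith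
      _ ≤ 2 * 82 ^ x * ((2 * 82 ^ x)⁻¹ * N ^ (1 / 32 : ℝ)) := by gcongr
      _ = _ := by field_simp
  calc _ ≤ (N ^ (1 / 32 : ℝ)) ^ 32 := by gcongr
    _ = N := by
      rw [← Real.rpow_natCast, ← Real.rpow_mul hN0.le]; norm_num

/-- The choice of the tuple length `p + 1`: minimal with `d ^ 4 ≤ N ^ (p + 1)`. Here `M` bounds
`|W| / d`. The first conclusion bounds the expected number of bad pairs, the second one the
expected size of a common neighbourhood. -/
lemma exists_exponent (N M : ℝ) (d k : ℕ) (hd : 1 ≤ d) (hk : k * k ≤ d) (hN : 2 ^ 32 ≤ N)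
    (hM : 0 < M) (hMN : (2 * M) ^ 32 ≤ N) :
    ∃ p : ℕ, (d : ℝ) ^ 2 * M ^ 2 * (2 / N) ^ (p + 1) ≤ 1 / 4 ∧
      (k : ℝ) - 1 / 2 ≤ d / 2 * (1 / (2 * M)) ^ p := by
  have hN1 : (1 : ℝ) < N := by norm_num at hN; linarith
  have hN0 : (0 : ℝ) < N := by linarith
  have hd1 : (1 : ℝ) ≤ d := by exact_mod_cast hd
  have hkd : (k : ℝ) * k ≤ d := by exact_mod_cast hk
  have hex : ∃ p : ℕ, (d : ℝ) ^ 4 ≤ N ^ (p + 1) := by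
    obtain ⟨p, hp⟩ := pow_unbounded_of_one_lt ((d : ℝ) ^ 4) hN1
    exact ⟨p, hp.le.trans (pow_le_pow_right₀ hN1.le (Nat.le_succ p))⟩
  classical
  refine ⟨Nat.find hex, ?_, ?_⟩
  · have hp := Nat.find_spec hex
    set p := Nat.find hex
    -- Everything is compared after taking 32nd powers, to stay with natural exponents.
    have hq : N ≤ N ^ (p + 1) := by
      simpa using pow_le_pow_right₀ hN1.le (show 1 ≤ p + 1 by omega)
    set Q := N ^ (p + 1) with hQ
    have hQ0 : 0 < Q := by positivity
    have h2 : ((2 : ℝ) ^ (p + 1)) ^ 32 ≤ Q := by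
      rw [← pow_mul, mul_comm, pow_mul]
      exact pow_le_pow_left₀ (by norm_num) hN _
    have key : 4 * ((d : ℝ) ^ 2 * M ^ 2 * 2 ^ (p + 1)) ≤ Q := by
      refine le_of_pow_le_pow_left₀ (n := 32) (by norm_num) hQ0.le ?_
      calc (4 * ((d : ℝ) ^ 2 * M ^ 2 * 2 ^ (p + 1))) ^ 32
          = ((d : ℝ) ^ 4) ^ 16 * ((2 * M) ^ 32) ^ 2 * ((2 : ℝ) ^ (p + 1)) ^ 32 := by ring
        _ ≤ Q ^ 16 * Q ^ 2 * Q := by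
          have := hMN.trans hq
          gcongr
        _ = Q ^ 19 := by ring
        _ ≤ Q ^ 32 := pow_le_pow_right₀ (hN1.le.trans hq) (by norm_num)
    rw [div_pow, ← hQ, ← mul_div_assoc, div_le_iff₀ hQ0]
    linarith
  · rcases Nat.eq_zero_or_pos (Nat.find hex) with h0 | hpos
    · rw [h0, pow_zero, mul_one]
      nlinarith [sq_nonneg ((k : ℝ) - 1)]
    · have hlt := Nat.find_min hex (Nat.sub_lt hpos one_pos)
      rw [Nat.sub_add_cancel (show 1 ≤ Nat.find hex from hpos), not_le] at hlt
      set p := Nat.find hex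
      have hNp : N ≤ N ^ p := by simpa using pow_le_pow_right₀ hN1.le hpos
      have hd8 : (8 : ℝ) ≤ d := by
        by_contra! h
        have : (d : ℝ) ^ 4 ≤ 8 ^ 4 := by gcongr
        norm_num at this hN
        linarith
      set R := (2 * M) ^ p with hR
      have hR0 : 0 < R := by positivity
      have hR8 : R ^ 8 < d := by
        refine lt_of_pow_lt_pow_left₀ 4 (by linarith) ?_
        calc (R ^ 8) ^ 4 = ((2 * M) ^ 32) ^ p := by
              rw [hR, ← pow_mul, ← pow_mul, ← pow_mul]; congr 1; ring
          _ ≤ N ^ p := by gcongr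
          _ < _ := hlt
      have h4R : 4 * R ^ 2 ≤ d := by
        by_contra! h
        have h5 : 2 ≤ R ^ 2 := by linarith
        have h6 : 2 ^ 3 ≤ (R ^ 2) ^ 3 := by gcongr
        nlinarith
      have h7 : 2 * R * k ≤ d := by
        refine le_of_pow_le_pow_left₀ (n := 2) (by norm_num) (by linarith) ?_
        calc (2 * R * k) ^ 2 = 4 * R ^ 2 * ((k : ℝ) * k) := by ring
          _ ≤ (d : ℝ) * d := by gcongr
          _ = _ := by ring
      rw [div_pow, one_pow, ← hR]
      have h8 : (k : ℝ) ≤ d / 2 * (1 / R) := by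
        rw [mul_one_div, le_div_iff₀ hR0]
        linarith
      linarith

open Finset in
/-- The lemma once `|W|` has been compared with `N = n / d`: few vertices in `W` and a sparse rest
`A` produce the subdivision. -/
lemma subdivision_of_sparse {V : Type*} [Fintype V] [DecidableEq V] (G : SimpleGraph V)
    [DecidableRel G.Adj] (A : Finset V) (d k : ℕ) (N M : ℝ) (hd1 : 1 ≤ d) (hk : k * k ≤ d)
    (hn : (Fintype.card V : ℝ) = N * d) (hN : 2 ^ 32 ≤ N) (hM : 0 < M)
    (hMN : (2 * M) ^ 32 ≤ N) (hW : (#Aᶜ : ℝ) ≤ M * d)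
    (hd : ∀ v : V, (d : ℝ) ≤ ((G.neighborSet v).ncard : ℝ))
    (he : 2 * ((G.induce (A : Set V)).edgeSet.ncard : ℝ) < (d : ℝ) / 2 * #A) :
    HasBalancedSubdivision G k 2 := by
  obtain ⟨p, hp1, hp2⟩ := exists_exponent N M d k hd1 hk hN hM hMN
  have hcross := cross_edges G A d hd he
  have hd0 : (0 : ℝ) < d := by exact_mod_cast hd1
  have hN1 : (1 : ℝ) < N := by norm_num at hN; linarith
  have h2M : 2 * M ≤ N := by
    by_contra! h
    have : 2 * M ≤ (2 * M) ^ 32 := by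
      simpa using pow_le_pow_right₀ (by linarith : 1 ≤ 2 * M) (show 1 ≤ 32 by norm_num)
    linarith
  have hcard : (#A : ℝ) + #Aᶜ = N * d := by
    rw [← hn]; exact_mod_cast card_add_card_compl A
  have hA : N * d / 2 ≤ #A := by nlinarith
  have hA0 : (0 : ℝ) < #A := by
    have : 0 < N * d / 2 := by positivity
    linarith
  have hw0 : (0 : ℝ) < #Aᶜ := by
    rcases (Nat.cast_nonneg (α := ℝ) (#Aᶜ)).eq_or_lt with h | h
    · exfalso
      have : Aᶜ = ∅ := card_eq_zero.1 (by exact_mod_cast h.symm)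
      rw [this, sum_empty] at hcross
      have : 0 < (d : ℝ) / 2 * #A := by positivity
      linarith
    · exact h
  have hbad : (#Aᶜ : ℝ) ^ 2 * d ^ (p + 1) ≤ 1 / 4 * #A ^ (p + 1) := by
    calc (#Aᶜ : ℝ) ^ 2 * d ^ (p + 1) ≤ (M * d) ^ 2 * (2 / N * #A) ^ (p + 1) := by
          gcongr
          rw [div_mul_eq_mul_div, le_div_iff₀ (by linarith)]
          linarith
      _ = (d : ℝ) ^ 2 * M ^ 2 * (2 / N) ^ (p + 1) * #A ^ (p + 1) := by rw [mul_pow (2 / N)]; ring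
      _ ≤ _ := by gcongr
  have hbig : (k - 1 / 2 : ℝ) * #A ^ (p + 1) ≤
      ∑ u ∈ Aᶜ, (#{a ∈ A | G.Adj u a} : ℝ) ^ (p + 1) := by
    calc (k - 1 / 2 : ℝ) * #A ^ (p + 1)
        ≤ d / 2 * (1 / (2 * M)) ^ p * #A ^ (p + 1) := by gcongr
      _ = (d / 2 * #A) ^ (p + 1) / (M * d) ^ p := by
          rw [eq_div_iff (by positivity), div_pow, one_pow, pow_succ (d / 2 * (#A : ℝ)), mul_pow,
            mul_pow, mul_pow, div_pow]
          field_simp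
          ring
      _ ≤ (∑ u ∈ Aᶜ, (#{a ∈ A | G.Adj u a} : ℝ)) ^ (p + 1) / (#Aᶜ : ℝ) ^ p := by gcongr
      _ ≤ _ := pow_sum_div_card_le_sum_pow (fun _ _ => Nat.cast_nonneg _) p
  obtain ⟨S, hSW, hkS, hS⟩ := exists_rich_set G A Aᶜ p k d (by
    have : (0 : ℝ) < (#A : ℝ) ^ (p + 1) := by positivity
    have h : ((k * #A ^ (p + 1) + #Aᶜ ^ 2 * d ^ (p + 1) : ℕ) : ℝ) <
        ((∑ u ∈ Aᶜ, #{a ∈ A | G.Adj u a} ^ (p + 1) + #A ^ (p + 1) : ℕ) : ℝ) := by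
      push_cast
      linarith
    exact_mod_cast h)
  exact hasBalancedSubdivision_of_rich G A S (disjoint_compl_right.mono_right hSW) k d hk hkS hS

/-- Robust average-degree lemma: for `s ≥ 8x > 0` there is `K = K(s,x)` such that for
`n ≥ K·d` and `d ≥ log^s n`, every `n`-vertex graph `G` with `δ(G) ≥ d` containing no
`TK_{√d}^{(2)}` satisfies: for every `W ⊆ V(G)` with `|W| ≤ d·m^x` (where `m` is the
smallest even integer exceeding `80·log⁴(n/d)`), the average degree of `G − W` is at
least `d/2`. -/
theorem stmt_6 (s x : ℝ) (hx : 0 < 8 * x) (hsx : 8 * x ≤ s) :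
    ∃ K : ℝ, ∀ n d : ℕ, K * (d : ℝ) ≤ (n : ℝ) → (Real.log n) ^ s ≤ (d : ℝ) →
      ∀ (V : Type) (_ : Fintype V) (G : SimpleGraph V), Fintype.card V = n →
        (∀ v : V, (d : ℝ) ≤ ((G.neighborSet v).ncard : ℝ)) →
        ¬ HasBalancedSubdivision G (Nat.sqrt d) 2 →
        ∀ m : ℕ, Even m → 80 * (Real.log ((n : ℝ) / (d : ℝ))) ^ 4 < (m : ℝ) →
          (∀ m' : ℕ, Even m' → 80 * (Real.log ((n : ℝ) / (d : ℝ))) ^ 4 < (m' : ℝ) → m ≤ m') →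
          ∀ W : Set V, (W.ncard : ℝ) ≤ (d : ℝ) * (m : ℝ) ^ x →
            (d : ℝ) / 2 ≤
              2 * (((G.induce Wᶜ).edgeSet.ncard : ℝ)) / (((Wᶜ : Set V).ncard : ℝ)) := by
  classical
  obtain ⟨K, hK, hKN⟩ := exists_threshold x (by linarith)
  refine ⟨K, fun n d hnd _ V _ G hV hdeg hno m hm hmlt hmin W hW => ?_⟩
  rcases Nat.eq_zero_or_pos d with rfl | hd
  · simp only [Nat.cast_zero, zero_div]
    positivity
  have hd0 : (0 : ℝ) < d := by exact_mod_cast hd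
  set N : ℝ := n / d with hNdef
  have hN : K ≤ N := by rwa [hNdef, le_div_iff₀ hd0]
  have hlog4 : 0 ≤ Real.log N ^ 4 := by positivity
  have hm2 : (m : ℝ) ≤ 80 * Real.log N ^ 4 + 2 := by
    by_contra! h
    have h2m : 2 ≤ m := by
      have : (2 : ℝ) < m := by linarith
      exact_mod_cast this.le
    have := hmin (m - 2) ((Nat.even_sub h2m).2 (by simp [hm])) (by
      push_cast [Nat.cast_sub h2m]; linarith)
    omega
  set M : ℝ := (m : ℝ) ^ x with hMdef
  have hm0 : (0 : ℝ) < m := by linarith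
  have hM0 : 0 < M := Real.rpow_pos_of_pos hm0 x
  have hMN : (2 * M) ^ 32 ≤ N := by
    refine le_trans ?_ (hKN N hN)
    have : M ≤ (80 * Real.log N ^ 4 + 2) ^ x :=
      Real.rpow_le_rpow hm0.le hm2 (by linarith)
    gcongr
  by_contra! hlt
  apply hno
  have hcoe : ((Wᶜ.toFinset : Finset V) : Set V) = Wᶜ := Set.coe_toFinset _
  have hWc : ((Wᶜ.toFinset)ᶜ : Finset V) = W.toFinset := by ext; simp
  have hcardA : (Wᶜ : Set V).ncard = Wᶜ.toFinset.card := Set.ncard_eq_toFinset_card' _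
  have hn0 : (Fintype.card V : ℝ) = N * d := by
    rw [hV, hNdef]; field_simp
  have hWcard : ((Wᶜ.toFinset)ᶜ.card : ℝ) ≤ M * d := by
    rw [hWc, ← Set.ncard_eq_toFinset_card']
    linarith
  -- Division by zero would only occur for `W = V`, which is too large to be allowed.
  have hA0 : (0 : ℝ) < ((Wᶜ : Set V).ncard : ℝ) := by
    rw [Nat.cast_pos, Nat.pos_iff_ne_zero]
    intro h0
    have h1 : ((Wᶜ : Set V).ncard : ℝ) + W.ncard = N * d := by
      rw [← hn0, ← Nat.card_eq_fintype_card, ← Set.ncard_add_ncard_compl W]; push_cast; ring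
    rw [h0, Nat.cast_zero, zero_add] at h1
    have h2 : N ≤ M := by
      have : N * d ≤ M * d := by linarith
      exact le_of_mul_le_mul_right this hd0
    have h3 : (1 : ℝ) < N := by norm_num at hK; linarith
    have h4 : 2 * M ≤ (2 * M) ^ 32 := by
      simpa using pow_le_pow_right₀ (by linarith : 1 ≤ 2 * M) (show 1 ≤ 32 by norm_num)
    linarith
  rw [div_lt_iff₀ hA0, hcardA] at hlt
  refine subdivision_of_sparse G Wᶜ.toFinset d (Nat.sqrt d) N M hd (Nat.sqrt_le d) hn0
    (hK.trans hN) hM0 hMN hWcard hdeg ?_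
  rwa [hcoe]
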